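/- For 1 ≤ t ≤ min{m,n}, the ideal of the localisation O_q(M_{m,n})[X_{1n}⁻¹] generated by all t×t quantum minors of X coincides with the right ideal generated by those t×t minors [I|J] with 1 ∈ I and n ∈ J. -/

import Mathlib

noncomputable section
open scoped BigOperators

/-- The defining relations of an `m × n` `q`-quantum matrix. -/
def IsQMat {k A : Type*} [Field k] [Ring A] [Algebra k A] (q : k) {m n : ℕ}
    (X : Fin m → Fin n → A) : Prop :=
  (∀ (i : Fin m) (j l : Fin n), j < l → X i j * X i l = q • (X i l * X i j)) ∧
  (∀ (i r : Fin m) (j : Fin n), i < r → X i j * X r j = q • (X r j * X i j)) ∧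
  (∀ (i r : Fin m) (j l : Fin n), i < r → j < l → X i l * X r j = X r j * X i l) ∧
  (∀ (i r : Fin m) (j l : Fin n), i < r → j < l →
    X i j * X r l - X r l * X i j = (q - q⁻¹) • (X i l * X r j))

/-- The relations defining `O_q(M_{m,n})` as a quotient of the free algebra. -/
inductive QMRel (k : Type*) [Field k] (q : k) (m n : ℕ) :
    FreeAlgebra k (Fin m × Fin n) → FreeAlgebra k (Fin m × Fin n) → Prop
  | row (i : Fin m) (j l : Fin n) (h : j < l) :
      QMRel k q m n (FreeAlgebra.ι k (i, j) * FreeAlgebra.ι k (i, l))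
        (q • (FreeAlgebra.ι k (i, l) * FreeAlgebra.ι k (i, j)))
  | col (i r : Fin m) (j : Fin n) (h : i < r) :
      QMRel k q m n (FreeAlgebra.ι k (i, j) * FreeAlgebra.ι k (r, j))
        (q • (FreeAlgebra.ι k (r, j) * FreeAlgebra.ι k (i, j)))
  | anti (i r : Fin m) (j l : Fin n) (h1 : i < r) (h2 : j < l) :
      QMRel k q m n (FreeAlgebra.ι k (i, l) * FreeAlgebra.ι k (r, j))
        (FreeAlgebra.ι k (r, j) * FreeAlgebra.ι k (i, l))
  | diag (i r : Fin m) (j l : Fin n) (h1 : i < r) (h2 : j < l) :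
      QMRel k q m n (FreeAlgebra.ι k (i, j) * FreeAlgebra.ι k (r, l))
        (FreeAlgebra.ι k (r, l) * FreeAlgebra.ι k (i, j) +
          (q - q⁻¹) • (FreeAlgebra.ι k (i, l) * FreeAlgebra.ι k (r, j)))

/-- The quantum matrix algebra `O_q(M_{m,n})`. -/
abbrev OqM (k : Type*) [Field k] (q : k) (m n : ℕ) := RingQuot (QMRel k q m n)

/-- The canonical generators `X_{ij}` of `O_q(M_{m,n})`. -/
def qX (k : Type*) [Field k] (q : k) (m n : ℕ) (i : Fin m) (j : Fin n) : OqM k q m n :=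
  RingQuot.mkAlgHom k (QMRel k q m n) (FreeAlgebra.ι k (i, j))

/-- The number of inversions (the length `ℓ(σ)`) of a permutation of `Fin t`. -/
def invCount {t : ℕ} (σ : Equiv.Perm (Fin t)) : ℕ :=
  Finset.card (Finset.univ.filter (fun p : Fin t × Fin t => p.1 < p.2 ∧ σ p.2 < σ p.1))

/-- The quantum determinant of a `t × t` matrix with entries in an algebra:
`Σ_σ (-q)^{ℓ(σ)} M_{1,σ(1)} ⋯ M_{t,σ(t)}`. -/
def qdet {k : Type*} [Field k] {A : Type*} [Ring A] [Algebra k A] (q : k) {t : ℕ}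
    (M : Fin t → Fin t → A) : A :=
  ∑ σ : Equiv.Perm (Fin t), ((-q) ^ invCount σ) • (List.ofFn (fun i => M i (σ i))).prod

/-- The quantum minor `[I|J]` of the matrix `X` on rows `I` and columns `J`. -/
def qminor {k : Type*} [Field k] {A : Type*} [Ring A] [Algebra k A] (q : k) {m n t : ℕ}
    (X : Fin m → Fin n → A) (I : Finset (Fin m)) (J : Finset (Fin n))
    (hI : I.card = t) (hJ : J.card = t) : A :=
  qdet q (fun a b => X (I.orderIsoOfFin hI a) (J.orderIsoOfFin hJ b))

/-- The elements `X'_{ij} = X_{ij} - q⁻¹ X_{1j} X_{in} X_{1n}⁻¹` in a localisation of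
`O_q(M_{m,n})` at the normal element `X_{1n}`, where `φ` is the localisation map and
`u = X_{1n}⁻¹`. -/
def Xp {k B : Type*} [Field k] [Ring B] [Algebra k B] (q : k) {m n : ℕ}
    (hm : 0 < m) (hn : 0 < n) (φ : OqM k q m n →ₐ[k] B) (u : B)
    (i : Fin m) (j : Fin n) : B :=
  φ (qX k q m n i j) -
    q⁻¹ • (φ (qX k q m n ⟨0, hm⟩ j) * φ (qX k q m n i ⟨n - 1, by omega⟩) * u)

section QAux
variable {k : Type*} [Field k] {A : Type*} [Ring A] [Algebra k A]
variable {γ : Type*} [LinearOrder γ]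

/-- number of elements of `J` below `j`. -/
def qpos (J : Finset γ) (j : γ) : ℕ := (J.filter (fun x => x < j)).card

/-- number of elements of `J` strictly between `j` and `l`. -/
def qbet (J : Finset γ) (j l : γ) : ℕ := (J.filter (fun x => j < x ∧ x < l)).card

lemma sum_rank (T : Finset γ) (F : ℕ → k) :
    ∑ p ∈ T, F (T.filter (fun x => x < p)).card = ∑ i ∈ Finset.range T.card, F i := by
  induction T using Finset.induction_on_max with
  | empty => simp
  | insert a s hs ih =>
    have ha : a ∉ s := fun h => lt_irrefl _ (hs a h)
    rw [Finset.sum_insert ha, Finset.card_insert_of_notMem ha, Finset.sum_range_succ, ← ih, add_comm]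
    congr 1
    · apply Finset.sum_congr rfl
      intro p hp
      congr 2
      ext x
      simp only [Finset.mem_filter, Finset.mem_insert]
      constructor
      · rintro ⟨rfl | h, h2⟩
        · exact absurd (hs p hp) (not_lt.mpr h2.le)
        · exact ⟨h, h2⟩
      · rintro ⟨h, h2⟩; exact ⟨Or.inr h, h2⟩
    · congr 2
      ext x
      simp only [Finset.mem_filter, Finset.mem_insert]
      constructor
      · rintro ⟨rfl | h, h2⟩
        · exact absurd h2 (lt_irrefl _)
        · exact h
      · intro h; exact ⟨Or.inr h, hs x h⟩

lemma qpos_eq {J : Finset γ} {j p : γ} (hj : j ∈ J) (hjp : j < p) :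
    qpos J p = qpos J j + 1 + qbet J j p := by
  unfold qpos qbet
  have : J.filter (fun x => x < p) =
      insert j (J.filter (fun x => x < j)) ∪ J.filter (fun x => j < x ∧ x < p) := by
    ext x
    simp only [Finset.mem_filter, Finset.mem_union, Finset.mem_insert]
    constructor
    · rintro ⟨h1, h2⟩
      rcases lt_trichotomy x j with h | h | h
      · exact Or.inl (Or.inr ⟨h1, h⟩)
      · exact Or.inl (Or.inl h)
      · exact Or.inr ⟨h1, h, h2⟩
    · rintro ((rfl | ⟨h1, h2⟩) | ⟨h1, h2, h3⟩)
      · exact ⟨hj, hjp⟩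
      · exact ⟨h1, h2.trans hjp⟩
      · exact ⟨h1, h3⟩
  rw [this, Finset.card_union_of_disjoint, Finset.card_insert_of_notMem (by simp)]
  rw [Finset.disjoint_left]
  intro x hx hx'
  simp only [Finset.mem_filter, Finset.mem_insert] at hx hx'
  rcases hx with rfl | hx
  · exact lt_irrefl _ hx'.2.1
  · exact lt_asymm hx.2 hx'.2.1

lemma qgeom (a : k) (ha : a ≠ 0) {J : Finset γ} {j l : γ} (hj : j ∈ J) :
    a ^ qpos J j + ∑ p ∈ J.filter (fun x => j < x ∧ x < l),
      (a - a⁻¹) * a ^ (qpos J p + qbet J j p) = a ^ (qpos J j + 2 * qbet J j l) := by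
  have h1 : ∀ p ∈ J.filter (fun x => j < x ∧ x < l),
      (a - a⁻¹) * a ^ (qpos J p + qbet J j p) =
      (fun i => a ^ qpos J j * ((a ^ 2 - 1) * (a ^ 2) ^ i))
        ((J.filter (fun x => j < x ∧ x < l)).filter (fun x => x < p)).card := by
    intro p hp
    simp only [Finset.mem_filter] at hp
    have h2 : ((J.filter (fun x => j < x ∧ x < l)).filter (fun x => x < p)).card = qbet J j p := by
      unfold qbet
      rw [Finset.filter_filter]
      congr 1
      ext x
      simp only [Finset.mem_filter]
      constructor
      · rintro ⟨h, ⟨h1, h2⟩, h3⟩; exact ⟨h, h1, h3⟩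
      · rintro ⟨h, h1, h3⟩; exact ⟨h, ⟨h1, h3.trans hp.2.2⟩, h3⟩
    simp only [h2, qpos_eq hj hp.2.1]
    field_simp
    ring
  rw [Finset.sum_congr rfl h1, sum_rank _ (fun i => a ^ qpos J j * ((a ^ 2 - 1) * (a ^ 2) ^ i)), ← Finset.mul_sum, ← Finset.mul_sum, mul_comm (a^2-1),
    geom_sum_mul]
  change _ + _ * ((a^2) ^ qbet J j l - 1) = _
  ring

lemma qbet_erase_left {J : Finset γ} {p j l : γ} (h : ¬ (j < p ∧ p < l)) :
    qbet (J.erase p) j l = qbet J j l := by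
  unfold qbet
  congr 1
  ext x
  simp only [Finset.mem_filter, Finset.mem_erase]
  constructor
  · rintro ⟨⟨_, h1⟩, h2⟩; exact ⟨h1, h2⟩
  · rintro ⟨h1, h2⟩
    exact ⟨⟨fun e => h (e ▸ h2), h1⟩, h2⟩

lemma qbet_erase_mid {J : Finset γ} {p j l : γ} (hp : p ∈ J) (h : j < p ∧ p < l) :
    qbet (J.erase p) j l + 1 = qbet J j l := by
  unfold qbet
  rw [Finset.filter_erase, Finset.card_erase_add_one]
  simp [hp, h]

lemma qpos_insert_erase {J : Finset γ} {p j l : γ} (hj : j ∈ J) (hl : l ∉ J) (hp : p ∈ J)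
    (hpj : p ≠ j) (hjl : j < l) :
    qbet J j l + qpos (insert l (J.erase j)) p = qpos J p + qbet (J.erase p) j l := by
  have hpl : p ≠ l := fun e => hl (e ▸ hp)
  have key : qpos (insert l (J.erase j)) p + (if j < p then 1 else 0)
      = qpos J p + (if l < p then 1 else 0) := by
    unfold qpos
    rw [Finset.filter_insert, Finset.filter_erase]
    by_cases h1 : l < p
    · have h2 : j < p := hjl.trans h1
      rw [if_pos h1, if_pos h1, if_pos h2, Finset.card_insert_of_notMem (by simp [hl]), add_right_comm,
        Finset.card_erase_add_one (by simp [hj, h2])]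
    · rw [if_neg h1, if_neg h1]
      by_cases h2 : j < p
      · rw [if_pos h2, Finset.card_erase_add_one (by simp [hj, h2])]; rfl
      · rw [if_neg h2, Finset.erase_eq_of_notMem (by simp [h2])]
  by_cases h : j < p ∧ p < l
  · have := qbet_erase_mid hp h
    rw [if_pos h.1, if_neg h.2.le.not_gt] at key
    omega
  · have := qbet_erase_left (J := J) h
    by_cases h1 : j < p
    · have h2 : l < p := lt_of_le_of_ne (not_lt.mp fun h2 => h ⟨h1, h2⟩) (Ne.symm hpl)
      rw [if_pos h1, if_pos h2] at key
      omega
    · have h2 : ¬ l < p := fun h2 => h1 (hjl.trans h2)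
      rw [if_neg h1, if_neg h2] at key
      omega

lemma qpos_insert_erase_self {J : Finset γ} {j l : γ} (hj : j ∈ J)
    (hjl : j < l) :
    qpos (insert l (J.erase j)) l = qpos J j + qbet J j l := by
  have h := qpos_eq hj hjl
  have : qpos (insert l (J.erase j)) l + 1 = qpos J l := by
    unfold qpos
    rw [Finset.filter_insert, if_neg (lt_irrefl _), Finset.filter_erase,
      Finset.card_erase_add_one (by simp [hj, hjl])]
  omega

/-- Laplace type operator. -/
def qC (q : k) (x : γ → A) (d : Finset γ → A) (J : Finset γ) : A :=
  ∑ j ∈ J, (-q) ^ qpos J j • (x j * d (J.erase j))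

/-- result of moving `z l` to the right of `d J`. -/
def qG (q : k) (z : γ → A) (d : Finset γ → A) (l : γ) (J : Finset γ) : A :=
  if l ∈ J then q⁻¹ • (d J * z l) else
    d J * z l + ∑ j ∈ J.filter (fun j => j < l),
      ((q⁻¹ - q) * (-q) ^ qbet J j l) • (d (insert l (J.erase j)) * z j)

lemma qG_Y (q : k) (hq : q ≠ 0) (y : A) (z : γ → A) (d : Finset γ → A) (l : γ) (J : Finset γ) :
    ∑ p ∈ J.filter (fun p => p < l),
      ((q⁻¹ - q) * (-q) ^ qpos J p) • (y * qG q z d p (J.erase p)) =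
    ∑ j ∈ J.filter (fun p => p < l),
      ((q⁻¹ - q) * (-q) ^ (qpos J j + 2 * qbet J j l)) • (y * d (J.erase j) * z j) := by
  have hβ : q⁻¹ - q = (-q) - (-q)⁻¹ := by rw [inv_neg]; ring
  have h1 : ∀ p ∈ J.filter (fun p => p < l),
      ((q⁻¹ - q) * (-q) ^ qpos J p) • (y * qG q z d p (J.erase p)) =
      ((q⁻¹ - q) * (-q) ^ qpos J p) • (y * d (J.erase p) * z p) +
      ∑ j ∈ J.filter (fun p => p < l), if j < p then
        ((q⁻¹ - q) * ((q⁻¹ - q) * (-q) ^ (qpos J p + qbet J j p))) • (y * d (J.erase j) * z j)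
        else 0 := by
    intro p hp
    simp only [Finset.mem_filter] at hp
    rw [qG, if_neg (by simp), mul_add, smul_add, mul_assoc]
    congr 1
    rw [← Finset.sum_filter, Finset.filter_filter, Finset.mul_sum, Finset.smul_sum]
    have h2 : (J.erase p).filter (fun j => j < p) = J.filter (fun a => a < l ∧ a < p) := by
      ext x
      simp only [Finset.mem_filter, Finset.mem_erase]
      constructor
      · rintro ⟨⟨_, h⟩, h'⟩; exact ⟨h, h'.trans hp.2, h'⟩
      · rintro ⟨h, h', h''⟩; exact ⟨⟨h''.ne, h⟩, h''⟩
    rw [h2]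
    apply Finset.sum_congr rfl
    intro j hj
    simp only [Finset.mem_filter] at hj
    rw [Finset.erase_right_comm, Finset.insert_erase (by simp [hp.1, hj.2.2.ne']),
      qbet_erase_left (by simp), mul_smul_comm, smul_smul, mul_assoc y]
    congr 1
    ring
  rw [Finset.sum_congr rfl h1, Finset.sum_add_distrib, Finset.sum_comm, ← Finset.sum_add_distrib]
  apply Finset.sum_congr rfl
  intro j hj
  simp only [Finset.mem_filter] at hj
  rw [← Finset.sum_filter, ← Finset.sum_smul, ← add_smul, ← Finset.mul_sum, ← mul_add,
    ← qgeom (-q) (neg_ne_zero.mpr hq) hj.1, ← hβ, Finset.filter_filter]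
  congr 4
  ext x
  simp [and_comm]

lemma qG_qC (q : k) (hq : q ≠ 0) (x z : γ → A) (d : Finset γ → A) (l : γ) (J : Finset γ) :
    qG q z (qC q x d) l J = ∑ p ∈ J, (-q) ^ qpos J p •
      ((if l = p then q⁻¹ else 1 : k) • (x p * qG q z d l (J.erase p)) +
       (if p < l then q⁻¹ - q else 0 : k) • (x l * qG q z d p (J.erase p))) := by
  have hY := qG_Y q hq (x l) z d l J
  simp only [smul_add, Finset.sum_add_distrib]
  have h2 : ∑ p ∈ J, (-q) ^ qpos J p • (if p < l then q⁻¹ - q else 0 : k) •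
      (x l * qG q z d p (J.erase p)) = ∑ p ∈ J.filter (fun p => p < l),
      ((q⁻¹ - q) * (-q) ^ qpos J p) • (x l * qG q z d p (J.erase p)) := by
    rw [Finset.sum_filter]
    apply Finset.sum_congr rfl
    intro p _
    split_ifs
    · rw [smul_smul, mul_comm]
    · simp
  rw [h2, hY]
  by_cases hl : l ∈ J
  · rw [← Finset.add_sum_erase _ _ hl, if_pos rfl]
    rw [qG, if_pos hl, qG, if_neg (by simp), qC, ← Finset.add_sum_erase _ _ hl]
    have h3 : ∑ p ∈ J.erase l, (-q) ^ qpos J p • (if l = p then q⁻¹ else 1 : k) •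
        (x p * qG q z d l (J.erase p)) = q⁻¹ • ((∑ p ∈ J.erase l, (-q) ^ qpos J p •
          (x p * d (J.erase p))) * z l) := by
      rw [Finset.sum_mul, Finset.smul_sum]
      apply Finset.sum_congr rfl
      intro p hp
      have hpl : p ≠ l := Finset.ne_of_mem_erase hp
      rw [if_neg hpl.symm, qG, if_pos (by simp [hl, hpl.symm]), one_smul, mul_smul_comm,
        smul_comm, smul_mul_assoc, mul_assoc]
    rw [h3, add_mul, smul_add]
    have h4 : (J.erase l).filter (fun j => j < l) = J.filter (fun j => j < l) := by
      ext x
      simp only [Finset.mem_filter, Finset.mem_erase]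
      constructor
      · rintro ⟨⟨_, h⟩, h'⟩; exact ⟨h, h'⟩
      · rintro ⟨h, h'⟩; exact ⟨⟨h'.ne, h⟩, h'⟩
    rw [h4]
    have h5 : (-q) ^ qpos J l • q⁻¹ • (x l * ∑ j ∈ J.filter (fun j => j < l),
        ((q⁻¹ - q) * (-q) ^ qbet (J.erase l) j l) • (d (insert l ((J.erase l).erase j)) * z j))
        = - ∑ j ∈ J.filter (fun p => p < l),
      ((q⁻¹ - q) * (-q) ^ (qpos J j + 2 * qbet J j l)) • (x l * d (J.erase j) * z j) := by
      rw [Finset.mul_sum, Finset.smul_sum, Finset.smul_sum, ← Finset.sum_neg_distrib]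
      apply Finset.sum_congr rfl
      intro j hj
      simp only [Finset.mem_filter] at hj
      rw [Finset.erase_right_comm, Finset.insert_erase (by simp [hl, hj.2.ne']),
        qbet_erase_left (by simp), mul_smul_comm, smul_smul, smul_smul, mul_assoc (x l), ← neg_smul,
        qpos_eq hj.1 hj.2]
      congr 1
      field_simp
      ring
    rw [mul_add, smul_add, smul_add, h5, smul_mul_assoc, smul_comm q⁻¹, mul_assoc]
    abel
  · rw [qG, if_neg hl]
    have h3 : ∀ p ∈ J, (-q) ^ qpos J p • (if l = p then q⁻¹ else 1 : k) •
        (x p * qG q z d l (J.erase p)) = ((-q) ^ qpos J p •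
          (x p * d (J.erase p))) * z l + ∑ j ∈ J.filter (fun j => j < l), if j = p then 0 else
          ((q⁻¹ - q) * (-q) ^ (qbet J j l + qpos (insert l (J.erase j)) p)) •
            (x p * d ((insert l (J.erase j)).erase p) * z j) := by
      intro p hp
      have hpl : p ≠ l := fun e => hl (e ▸ hp)
      rw [if_neg hpl.symm, qG, if_neg (by simp [hl]), one_smul, mul_add, smul_add, smul_mul_assoc,
        mul_assoc]
      congr 1
      rw [Finset.mul_sum, Finset.smul_sum]
      simp_rw [← ite_not (_ = p)]
      rw [← Finset.sum_filter, Finset.filter_filter]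
      have h4 : (J.erase p).filter (fun j => j < l) = J.filter (fun a => a < l ∧ ¬ a = p) := by
        ext x
        simp only [Finset.mem_filter, Finset.mem_erase]
        tauto
      rw [h4]
      apply Finset.sum_congr rfl
      intro j hj
      simp only [Finset.mem_filter] at hj
      rw [qpos_insert_erase hj.1 hl hp (Ne.symm hj.2.2) hj.2.1, Finset.erase_insert_of_ne hpl.symm,
        Finset.erase_right_comm, mul_smul_comm, smul_smul, mul_assoc]
      congr 1
      ring
    rw [Finset.sum_congr rfl h3, Finset.sum_add_distrib, Finset.sum_comm, ← Finset.sum_mul, add_assoc,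
      ← Finset.sum_add_distrib, qC]
    congr 1
    apply Finset.sum_congr rfl
    intro j hj
    simp only [Finset.mem_filter] at hj
    have hlj : l ∉ J.erase j := by simp [hl]
    rw [qC, Finset.sum_insert hlj, Finset.erase_insert hlj, qpos_insert_erase_self hj.1 hj.2, add_mul,
      smul_add, add_comm]
    congr 1
    · rw [← Finset.add_sum_erase _ _ hj.1, if_pos rfl, zero_add, Finset.sum_mul, Finset.smul_sum]
      apply Finset.sum_congr rfl
      intro p hp
      rw [if_neg (Finset.ne_of_mem_erase hp).symm, smul_mul_assoc, smul_smul]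
      congr 1
      ring
    · rw [smul_mul_assoc, smul_smul]
      congr 1
      ring

end QAux
section QAux2
variable {k : Type*} [Field k] {A : Type*} [Ring A] [Algebra k A]
variable {ρ γ : Type*} [LinearOrder ρ] [LinearOrder γ]

/-- the defining relations, over arbitrary linearly ordered index sets. -/
def QRel (q : k) (X : ρ → γ → A) : Prop :=
  (∀ (i : ρ) (j l : γ), j < l → X i j * X i l = q • (X i l * X i j)) ∧
  (∀ (i r : ρ) (j : γ), i < r → X i j * X r j = q • (X r j * X i j)) ∧
  (∀ (i r : ρ) (j l : γ), i < r → j < l → X i l * X r j = X r j * X i l) ∧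
  (∀ (i r : ρ) (j l : γ), i < r → j < l →
    X i j * X r l - X r l * X i j = (q - q⁻¹) • (X i l * X r j))

lemma QRel.transpose {q : k} {X : ρ → γ → A} (h : QRel q X) : QRel q (fun j i => X i j) := by
  obtain ⟨h1, h2, h3, h4⟩ := h
  refine ⟨fun i j l hjl => h2 _ _ _ hjl, fun i r j hir => h1 _ _ _ hir, ?_, ?_⟩
  · intro i r j l hir hjl
    exact (h3 _ _ _ _ hjl hir).symm
  · intro i r j l hir hjl
    rw [← h3 _ _ _ _ hjl hir]
    exact h4 _ _ _ _ hjl hir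

/-- uniform (R-matrix) form of the relations. -/
lemma QRel.uniform {q : k} (hq : q ≠ 0) {X : ρ → γ → A} (h : QRel q X) (r s : ρ) (j l : γ) :
    (if r = s then q⁻¹ else 1 : k) • (X s l * X r j) +
      (if s < r then q⁻¹ - q else 0 : k) • (X r l * X s j) =
    (if l = j then q⁻¹ else 1 : k) • (X r j * X s l) +
      (if j < l then q⁻¹ - q else 0 : k) • (X r l * X s j) := by
  obtain ⟨h1, h2, h3, h4⟩ := h
  rcases lt_trichotomy r s with hrs | rfl | hrs
  · rw [if_neg hrs.ne, if_neg hrs.le.not_gt]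
    rcases lt_trichotomy l j with hl | rfl | hl
    · rw [if_neg hl.ne, if_neg hl.le.not_gt, h3 _ _ _ _ hrs hl]
    · rw [if_pos rfl, if_neg (lt_irrefl _), h2 _ _ _ hrs]
      simp [smul_smul, hq]
    · rw [if_neg hl.ne', if_pos hl]
      have := h4 _ _ _ _ hrs hl
      rw [sub_eq_iff_eq_add] at this
      rw [this]
      module
  · rw [if_pos rfl, if_neg (lt_irrefl _)]
    rcases lt_trichotomy l j with hl | rfl | hl
    · rw [if_neg hl.ne, if_neg hl.le.not_gt, h1 _ _ _ hl, smul_smul, inv_mul_cancel₀ hq]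
    · simp
    · rw [if_neg hl.ne', if_pos hl, h1 _ _ _ hl]
      module
  · rw [if_neg hrs.ne', if_pos hrs]
    rcases lt_trichotomy l j with hl | rfl | hl
    · rw [if_neg hl.ne, if_neg hl.le.not_gt]
      have := h4 _ _ _ _ hrs hl
      rw [sub_eq_iff_eq_add] at this
      rw [this, h3 _ _ _ _ hrs hl]
      module
    · rw [if_pos rfl, if_neg (lt_irrefl _), h2 _ _ _ hrs]
      module
    · rw [if_neg hl.ne', if_pos hl, h3 _ _ _ _ hrs hl]

/-- the minor on a list of rows and a finite set of columns. -/
def qD (q : k) (X : ρ → γ → A) : List ρ → Finset γ → A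
  | [] => fun J => if J = ∅ then 1 else 0
  | r :: R => qC q (X r) (qD q X R)

/-- left multiplication by a row variable. -/
def qgen (q : k) (X : ρ → γ → A) (s : ρ) (R : List ρ) (l : γ) (J : Finset γ) : A :=
  X s l * qD q X R J

/-- transfer operator. -/
def qL (q : k) (x : γ → A) : (γ → Finset γ → A) →ₗ[k] (γ → Finset γ → A) where
  toFun f l J := ∑ p ∈ J, (-q) ^ qpos J p •
      ((if l = p then q⁻¹ else 1 : k) • (x p * f l (J.erase p)) +
       (if p < l then q⁻¹ - q else 0 : k) • (x l * f p (J.erase p)))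
  map_add' f g := by
    ext l J
    simp only [Pi.add_apply, ← Finset.sum_add_distrib]
    refine Finset.sum_congr rfl fun p _ => ?_
    simp only [mul_add, smul_add]
    abel
  map_smul' c f := by
    ext l J
    simp only [Pi.smul_apply, Finset.smul_sum, RingHom.id_apply]
    refine Finset.sum_congr rfl fun p _ => ?_
    simp only [mul_smul_comm, smul_add, smul_smul]
    congr 2 <;> ring

lemma qL_qgen {q : k} (hq : q ≠ 0) {X : ρ → γ → A} (h : QRel q X) (r s : ρ) (R : List ρ) :
    qL q (X r) (qgen q X s R) = (if r = s then q⁻¹ else 1 : k) • qgen q X s (r :: R) +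
      (if s < r then q⁻¹ - q else 0 : k) • qgen q X r (s :: R) := by
  ext l J
  simp only [qL, LinearMap.coe_mk, AddHom.coe_mk, Pi.add_apply, Pi.smul_apply, qgen, qD, qC,
    Finset.mul_sum, Finset.smul_sum, ← Finset.sum_add_distrib]
  refine Finset.sum_congr rfl fun p _ => ?_
  have := congrArg (fun y => (-q) ^ qpos J p • (y * qD q X R (J.erase p))) (h.uniform hq r s p l)
  simp only [add_mul, smul_mul_assoc, mul_assoc] at this
  rw [← this, smul_add, mul_smul_comm, mul_smul_comm, smul_comm ((-q) ^ qpos J p),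
    smul_comm ((-q) ^ qpos J p)]

lemma qL_qG {q : k} (hq : q ≠ 0) {X : ρ → γ → A} (r s : ρ) (R : List ρ) :
    qL q (X r) (qG q (X s) (qD q X R)) = qG q (X s) (qD q X (r :: R)) := by
  ext l J
  exact (qG_qC q hq (X r) (X s) (qD q X R) l J).symm

lemma qG_nil {q : k} {X : ρ → γ → A} (s : ρ) :
    qG q (X s) (qD q X []) = qgen q X s [] := by
  ext l J
  unfold qG qgen qD
  by_cases hJ : J = ∅
  · subst hJ; simp
  · have : ∀ j, insert l (J.erase j) ≠ ∅ := fun j => Finset.insert_ne_empty _ _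
    simp [hJ, this]

lemma qG_mem {q : k} (hq : q ≠ 0) {X : ρ → γ → A} (h : QRel q X) (s : ρ) (R : List ρ) :
    ∃ c : k, c ≠ 0 ∧ qG q (X s) (qD q X R) - c • qgen q X s R ∈
      Submodule.span k {f | ∃ s' R', s < s' ∧ (s' :: R').Perm (s :: R) ∧ f = qgen q X s' R'} := by
  induction R with
  | nil => exact ⟨1, one_ne_zero, by simp [qG_nil]⟩
  | cons r R ih =>
    obtain ⟨c, hc, hm⟩ := ih
    refine ⟨c * (if r = s then q⁻¹ else 1), mul_ne_zero hc (by split_ifs <;> simp [hq]), ?_⟩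
    have h1 : ∀ f ∈ Submodule.span k
        {f | ∃ s' R', s < s' ∧ (s' :: R').Perm (s :: R) ∧ f = qgen q X s' R'},
        qL q (X r) f ∈ Submodule.span k
          {f | ∃ s' R', s < s' ∧ (s' :: R').Perm (s :: r :: R) ∧ f = qgen q X s' R'} := by
      intro f hf
      induction hf using Submodule.span_induction with
      | mem f hf =>
        obtain ⟨s', R', hs, hp, rfl⟩ := hf
        have hp1 : (r :: s' :: R').Perm (s :: r :: R) :=
          (hp.cons r).trans (List.Perm.swap _ _ _)
        rw [qL_qgen hq h]
        refine Submodule.add_mem _ (Submodule.smul_mem _ _ (Submodule.subset_span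
          ⟨s', r :: R', hs, (List.Perm.swap _ _ _).trans hp1, rfl⟩)) ?_
        split_ifs with hlt
        · exact Submodule.smul_mem _ _ (Submodule.subset_span
            ⟨r, s' :: R', hs.trans hlt, hp1, rfl⟩)
        · simp
      | zero => simp
      | add f g _ _ hf hg => rw [map_add]; exact Submodule.add_mem _ hf hg
      | smul c f _ hf => rw [map_smul]; exact Submodule.smul_mem _ _ hf
    have h2 := h1 _ hm
    rw [map_sub, qL_qG hq, map_smul, qL_qgen hq h] at h2
    have h3 : c • (if s < r then q⁻¹ - q else 0 : k) • qgen q X r (s :: R) ∈ Submodule.span k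
          {f | ∃ s' R', s < s' ∧ (s' :: R').Perm (s :: r :: R) ∧ f = qgen q X s' R'} := by
      split_ifs with hlt
      · exact Submodule.smul_mem _ _ (Submodule.smul_mem _ _ (Submodule.subset_span
            ⟨r, s :: R, hlt, List.Perm.swap _ _ _, rfl⟩))
      · simp
    have h4 := Submodule.add_mem _ h2 h3
    convert h4 using 1
    rw [smul_add, mul_smul]
    abel

/-- double expansion -/
lemma qD_cons_cons (q : k) (X : ρ → γ → A) (r s : ρ) (R : List ρ) (J : Finset γ) :
    qD q X (r :: s :: R) J = ∑ j ∈ J, ∑ l ∈ J.filter (fun l => j < l),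
      (-q) ^ (qpos J j + qpos J l - 1) • ((X r j * X s l - q • (X r l * X s j)) *
        qD q X R ((J.erase j).erase l)) := by
  have e1 : ∀ j ∈ J, ∀ l ∈ J.filter (fun l => j < l), qpos (J.erase j) l + 1 = qpos J l := by
    intro j hj l hl
    simp only [Finset.mem_filter] at hl
    unfold qpos
    rw [Finset.filter_erase, Finset.card_erase_add_one (by simp [hj, hl])]
  have e2 : ∀ j ∈ J, ∀ l ∈ J.filter (fun l => j < l), qpos (J.erase l) j = qpos J j := by
    intro j hj l hl
    simp only [Finset.mem_filter] at hl
    unfold qpos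
    rw [Finset.filter_erase, Finset.erase_eq_of_notMem (by simp [hl.2.le])]
  have e3 : qD q X (r :: s :: R) J = ∑ j ∈ J, ∑ l ∈ J,
      ((if j < l then (-q) ^ (qpos J j + qpos (J.erase j) l) •
        (X r j * X s l * qD q X R ((J.erase j).erase l)) else 0) +
      (if l < j then (-q) ^ (qpos J j + qpos (J.erase j) l) •
        (X r j * X s l * qD q X R ((J.erase j).erase l)) else 0)) := by
    simp only [qD, qC]
    refine Finset.sum_congr rfl fun j hj => ?_
    rw [← Finset.add_sum_erase J _ hj]
    simp only [lt_irrefl, if_false, add_zero, zero_add, Finset.mul_sum, Finset.smul_sum]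
    refine Finset.sum_congr rfl fun l hl => ?_
    have hne := Finset.ne_of_mem_erase hl
    rw [mul_smul_comm, smul_smul, ← pow_add, mul_assoc]
    rcases lt_or_gt_of_ne hne with h | h
    · simp [h, h.le.not_gt]
    · simp [h, h.le.not_gt]
  rw [e3]
  simp only [Finset.sum_add_distrib]
  rw [Finset.sum_comm (f := fun j l => if l < j then _ else _), ← Finset.sum_add_distrib]
  refine Finset.sum_congr rfl fun j hj => ?_
  rw [← Finset.sum_filter, ← Finset.sum_filter, ← Finset.sum_add_distrib]
  refine Finset.sum_congr rfl fun l hl => ?_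
  have := e1 j hj l hl
  rw [e2 j hj l hl, Finset.erase_right_comm (a := l), sub_mul, smul_sub, ← this]
  rw [smul_mul_assoc, smul_smul, sub_eq_add_neg, ← neg_smul]
  congr 2
  simp only [Nat.add_sub_cancel, ← add_assoc]
  ring

lemma qD_same {q : k} {X : ρ → γ → A} (h : QRel q X) (r : ρ) (R : List ρ) (J : Finset γ) :
    qD q X (r :: r :: R) J = 0 := by
  rw [qD_cons_cons]
  refine Finset.sum_eq_zero fun j _ => Finset.sum_eq_zero fun l hl => ?_
  simp only [Finset.mem_filter] at hl
  rw [h.1 _ _ _ hl.2, sub_self, zero_mul, smul_zero]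

lemma qD_swap_lt {q : k} (hq : q ≠ 0) {X : ρ → γ → A} (h : QRel q X) {r s : ρ} (hrs : r < s)
    (R : List ρ) (J : Finset γ) :
    qD q X (s :: r :: R) J = (-q) • qD q X (r :: s :: R) J := by
  rw [qD_cons_cons, qD_cons_cons, Finset.smul_sum]
  refine Finset.sum_congr rfl fun j _ => ?_
  rw [Finset.smul_sum]
  refine Finset.sum_congr rfl fun l hl => ?_
  simp only [Finset.mem_filter] at hl
  rw [smul_comm (-q), ← smul_mul_assoc (-q)]
  congr 2
  have h4 := h.2.2.2 _ _ _ _ hrs hl.2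
  rw [sub_eq_iff_eq_add] at h4
  rw [h4, ← h.2.2.1 _ _ _ _ hrs hl.2]
  simp only [smul_sub, smul_add, smul_smul, neg_smul, mul_sub, sub_smul, neg_mul,
    mul_inv_cancel₀ hq, one_smul]
  abel

lemma qD_perm {q : k} (hq : q ≠ 0) {X : ρ → γ → A} (h : QRel q X) {R R' : List ρ}
    (hp : R.Perm R') : ∃ c : k, ∀ J, qD q X R J = c • qD q X R' J := by
  induction hp with
  | nil => exact ⟨1, by simp⟩
  | cons x _ ih =>
    obtain ⟨c, hc⟩ := ih
    refine ⟨c, fun J => ?_⟩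
    simp only [qD, qC, hc, Finset.smul_sum, mul_smul_comm]
    exact Finset.sum_congr rfl fun j _ => smul_comm _ _ _
  | swap x y l =>
    rcases lt_trichotomy x y with hxy | rfl | hxy
    · exact ⟨-q, qD_swap_lt hq h hxy l⟩
    · exact ⟨1, by simp⟩
    · refine ⟨(-q)⁻¹, fun J => ?_⟩
      rw [qD_swap_lt hq h hxy, smul_smul, inv_mul_cancel₀ (neg_ne_zero.mpr hq), one_smul]
  | trans _ _ ih1 ih2 =>
    obtain ⟨c, hc⟩ := ih1
    obtain ⟨c', hc'⟩ := ih2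
    exact ⟨c * c', fun J => by rw [hc, hc', smul_smul]⟩

lemma qD_dup {q : k} (hq : q ≠ 0) {X : ρ → γ → A} (h : QRel q X) {r : ρ} {R : List ρ}
    (hr : r ∈ R) (J : Finset γ) : qD q X (r :: R) J = 0 := by
  obtain ⟨c, hc⟩ := qD_perm hq h ((List.perm_cons_erase hr).cons r)
  rw [hc, qD_same h, smul_zero]

lemma qD_not_nodup {q : k} (hq : q ≠ 0) {X : ρ → γ → A} (h : QRel q X) {R : List ρ}
    (hR : ¬ R.Nodup) (J : Finset γ) : qD q X R J = 0 := by
  rw [List.nodup_iff_forall_not_duplicate] at hR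
  push Not at hR
  obtain ⟨x, hx⟩ := hR
  rw [List.duplicate_iff_sublist] at hx
  have hx1 : x ∈ R := hx.subset (by simp)
  have hx2 : x ∈ R.erase x := by
    have := hx.erase x
    simp at this
    exact this
  obtain ⟨c, hc⟩ := qD_perm hq h (List.perm_cons_erase hx1)
  rw [hc, qD_dup hq h hx2, smul_zero]

lemma qD_card (q : k) (X : ρ → γ → A) (R : List ρ) (J : Finset γ) (hJ : J.card ≠ R.length) :
    qD q X R J = 0 := by
  induction R generalizing J with
  | nil => simp only [qD]; rw [if_neg]; rintro rfl; simp at hJ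
  | cons r R ih =>
    simp only [qD, qC]
    refine Finset.sum_eq_zero fun j hj => ?_
    rw [ih, mul_zero, smul_zero]
    rw [Finset.card_erase_of_mem hj]
    simp only [List.length_cons] at hJ
    have := Finset.card_pos.mpr ⟨j, hj⟩
    omega

lemma qpos_insert_min {J : Finset γ} {c j : γ} (hc : ∀ x ∈ J, c < x) (hj : j ∈ J) :
    qpos (insert c J) j = qpos J j + 1 := by
  unfold qpos
  rw [Finset.filter_insert, if_pos (hc j hj), Finset.card_insert_of_notMem]
  intro h
  simp only [Finset.mem_filter] at h
  exact lt_irrefl _ (hc _ h.1)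

lemma qpos_min {J : Finset γ} {c : γ} (hc : ∀ x ∈ J, c ≤ x) : qpos J c = 0 := by
  unfold qpos
  rw [Finset.card_eq_zero, Finset.filter_eq_empty_iff]
  intro x hx
  exact not_lt.mpr (hc x hx)

/-- row and column expansions agree -/
lemma qD_transpose {q : k} {X : ρ → γ → A} (h : QRel q X) (N : ℕ) :
    ∀ (R : List ρ) (C : List γ), R.length ≤ N → R.Pairwise (· < ·) → C.Pairwise (· < ·) →
    qD q X R C.toFinset = qD q (fun j i => X i j) C R.toFinset := by
  induction N using Nat.strong_induction_on with
  | _ N IH =>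
  intro R C hN hR hC
  match R, C with
  | [], [] => simp [qD]
  | [], c :: C => simp [qD, qC]
  | r :: R, [] => simp [qD, qC]
  | r :: R, c :: C =>
    simp only [List.length_cons] at hN
    rw [List.pairwise_cons] at hR hC
    have hr : ∀ x ∈ R.toFinset, r < x := fun x hx => hR.1 x (List.mem_toFinset.mp hx)
    have hc : ∀ x ∈ C.toFinset, c < x := fun x hx => hC.1 x (List.mem_toFinset.mp hx)
    have hr' : r ∉ R.toFinset := fun hh => lt_irrefl _ (hr _ hh)
    have hc' : c ∉ C.toFinset := fun hh => lt_irrefl _ (hc _ hh)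
    have hRn : R.Nodup := hR.2.imp (fun h => ne_of_lt h)
    have hCn : C.Nodup := hC.2.imp (fun h => ne_of_lt h)
    have p1 : qpos (insert c C.toFinset) c = 0 := qpos_min (by
      intro x hx; rcases Finset.mem_insert.mp hx with rfl | hx
      · exact le_rfl
      · exact (hc x hx).le)
    have p2 : qpos (insert r R.toFinset) r = 0 := qpos_min (by
      intro x hx; rcases Finset.mem_insert.mp hx with rfl | hx
      · exact le_rfl
      · exact (hr x hx).le)
    have tC : ∀ j, (C.erase j).toFinset = C.toFinset.erase j := by
      intro j; ext x; simp [hCn.mem_erase_iff]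
    have tR : ∀ j, (R.erase j).toFinset = R.toFinset.erase j := by
      intro j; ext x; simp [hRn.mem_erase_iff]
    have L : qD q X (r :: R) (c :: C).toFinset = X r c * qD q X R C.toFinset +
        ∑ j ∈ C.toFinset, ∑ i ∈ R.toFinset, (-q) ^ (qpos C.toFinset j + 1 + qpos R.toFinset i) •
          (X r j * X i c * qD q (fun j i => X i j) (C.erase j) (R.toFinset.erase i)) := by
      rw [List.toFinset_cons]
      simp only [qD, qC]
      rw [Finset.sum_insert hc', p1, Finset.erase_insert hc', pow_zero, one_smul]
      congr 1
      refine Finset.sum_congr rfl fun j hj => ?_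
      have hcj : c ≠ j := (hc j hj).ne
      have s1 : (c :: C.erase j).Pairwise (· < ·) := by
        rw [List.pairwise_cons]
        exact ⟨fun x hx => hC.1 x (List.mem_of_mem_erase hx), hC.2.sublist List.erase_sublist⟩
      have := IH R.length (by omega) R (c :: C.erase j) le_rfl hR.2 s1
      rw [List.toFinset_cons, tC] at this
      rw [Finset.erase_insert_of_ne hcj, this, qpos_insert_min hc hj]
      simp only [qD, qC]
      rw [Finset.mul_sum, Finset.smul_sum]
      refine Finset.sum_congr rfl fun i hi => ?_
      rw [mul_smul_comm, smul_smul, ← pow_add, mul_assoc]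
    have L' : qD q (fun j i => X i j) (c :: C) (r :: R).toFinset =
        X r c * qD q (fun j i => X i j) C R.toFinset +
        ∑ i ∈ R.toFinset, ∑ j ∈ C.toFinset, (-q) ^ (qpos R.toFinset i + 1 + qpos C.toFinset j) •
          (X i c * X r j * qD q X (R.erase i) (C.toFinset.erase j)) := by
      rw [List.toFinset_cons]
      simp only [qD, qC]
      rw [Finset.sum_insert hr', p2, Finset.erase_insert hr', pow_zero, one_smul]
      congr 1
      refine Finset.sum_congr rfl fun i hi => ?_
      have hri : r ≠ i := (hr i hi).ne
      have s1 : (r :: R.erase i).Pairwise (· < ·) := by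
        rw [List.pairwise_cons]
        exact ⟨fun x hx => hR.1 x (List.mem_of_mem_erase hx), hR.2.sublist List.erase_sublist⟩
      have hlen : (r :: R.erase i).length = R.length := by
        have hi' := List.mem_toFinset.mp hi
        have := List.length_pos_of_mem hi'
        rw [List.length_cons, List.length_erase_of_mem hi']
        omega
      have := IH R.length (by omega) (r :: R.erase i) C hlen.le s1 hC.2
      rw [List.toFinset_cons, tR] at this
      rw [Finset.erase_insert_of_ne hri, ← this, qpos_insert_min hr hi]
      simp only [qD, qC]
      rw [Finset.mul_sum, Finset.smul_sum]
      refine Finset.sum_congr rfl fun i hi => ?_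
      rw [mul_smul_comm, smul_smul, ← pow_add, mul_assoc]
    rw [L, L', IH R.length (by omega) R C le_rfl hR.2 hC.2, Finset.sum_comm]
    congr 1
    refine Finset.sum_congr rfl fun i hi => Finset.sum_congr rfl fun j hj => ?_
    have := IH R.length (by omega) (R.erase i) (C.erase j) (List.length_erase_le)
      (hR.2.sublist List.erase_sublist) (hC.2.sublist List.erase_sublist)
    rw [tC, tR] at this
    rw [this, h.2.2.1 _ _ _ _ (hr i hi) (hc j hj)]
    congr 2
    ring

end QAux2
section QAux3
variable {k : Type*} [Field k] {A : Type*} [Ring A] [Algebra k A]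

/-- the permutation with first value `p` and remaining pattern `τ`. -/
def consPerm {t : ℕ} (p : Fin (t + 1)) (τ : Equiv.Perm (Fin t)) : Equiv.Perm (Fin (t + 1)) :=
  Equiv.ofBijective (Fin.cons p (fun i => p.succAbove (τ i)) : Fin (t + 1) → Fin (t + 1))
    (Finite.injective_iff_bijective.mp (by
      rw [Fin.cons_injective_iff]
      refine ⟨?_, fun a b hab => τ.injective (Fin.succAbove_right_injective hab)⟩
      rintro ⟨i, hi⟩
      exact Fin.succAbove_ne _ _ hi))

lemma consPerm_zero {t : ℕ} (p : Fin (t + 1)) (τ : Equiv.Perm (Fin t)) : consPerm p τ 0 = p := rfl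

lemma consPerm_succ {t : ℕ} (p : Fin (t + 1)) (τ : Equiv.Perm (Fin t)) (i : Fin t) :
    consPerm p τ i.succ = p.succAbove (τ i) := rfl

lemma consPerm_bij (t : ℕ) : Function.Bijective
    (fun x : Fin (t + 1) × Equiv.Perm (Fin t) => consPerm x.1 x.2) := by
  rw [Fintype.bijective_iff_injective_and_card]
  constructor
  · rintro ⟨p, τ⟩ ⟨p', τ'⟩ h
    simp only at h
    have h0 : p = p' := by rw [← consPerm_zero p τ, h, consPerm_zero]
    subst h0
    congr 1
    ext1 i
    have := congrArg (fun σ => σ i.succ) h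
    simp only [consPerm_succ] at this
    exact Fin.succAbove_right_injective this
  · simp [Fintype.card_perm, Nat.factorial_succ]

lemma fin_card_lt {t : ℕ} (p : Fin t) :
    (Finset.univ.filter (fun i : Fin t => i < p)).card = p := by
  rw [show Finset.univ.filter (fun i : Fin t => i < p) = Finset.Iio p by ext; simp, Fin.card_Iio]

lemma card_succAbove_lt {t : ℕ} (p : Fin (t + 1)) (τ : Equiv.Perm (Fin t)) :
    (Finset.univ.filter (fun i : Fin t => p.succAbove (τ i) < p)).card = p := by
  have h1 : (Finset.univ.filter (fun i : Fin t => p.succAbove (τ i) < p)).card =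
      (Finset.univ.filter (fun i : Fin (t+1) => i < p)).card := by
    refine Finset.card_bij (fun i _ => p.succAbove (τ i)) ?_ ?_ ?_
    · intro i hi; simpa using hi
    · intro i _ j _ h; exact τ.injective (Fin.succAbove_right_injective h)
    · intro b hb
      simp only [Finset.mem_filter, Finset.mem_univ, true_and] at hb
      obtain ⟨y, hy⟩ := Fin.exists_succAbove_eq hb.ne
      exact ⟨τ.symm y, by simp [hy, hb], by simp [hy]⟩
  rw [h1, fin_card_lt]

lemma invCount_consPerm {t : ℕ} (p : Fin (t + 1)) (τ : Equiv.Perm (Fin t)) :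
    invCount (consPerm p τ) = p + invCount τ := by
  unfold invCount
  rw [Finset.card_filter, Fintype.sum_prod_type, Fin.sum_univ_succ]
  rw [Finset.card_filter, Fintype.sum_prod_type]
  congr 1
  · rw [Fin.sum_univ_succ]
    simp only [consPerm_zero, consPerm_succ, lt_irrefl, false_and, if_false, Fin.succ_pos, true_and,
      zero_add]
    rw [← Finset.card_filter, card_succAbove_lt]
  · refine Finset.sum_congr rfl fun i _ => ?_
    rw [Fin.sum_univ_succ]
    simp [consPerm_succ]

lemma qdet_succ (q : k) {t : ℕ} (M : Fin (t + 1) → Fin (t + 1) → A) :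
    qdet q M = ∑ p : Fin (t + 1), (-q) ^ (p : ℕ) •
      (M 0 p * qdet q (fun i j => M i.succ (p.succAbove j))) := by
  unfold qdet
  rw [← (consPerm_bij t).sum_comp, Fintype.sum_prod_type]
  refine Finset.sum_congr rfl fun p _ => ?_
  rw [Finset.mul_sum, Finset.smul_sum]
  refine Finset.sum_congr rfl fun τ _ => ?_
  rw [invCount_consPerm, List.ofFn_succ, List.prod_cons, pow_add, mul_smul, mul_smul_comm]
  rfl

variable {ρ γ : Type*} [LinearOrder ρ] [LinearOrder γ]

lemma qdet_eq_qD (q : k) (X : ρ → γ → A) (t : ℕ) (f : Fin t → ρ) (c : Fin t → γ)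
    (hc : StrictMono c) :
    qdet q (fun a b => X (f a) (c b)) = qD q X (List.ofFn f) (Finset.univ.image c) := by
  induction t with
  | zero => simp [qdet, qD, invCount]
  | succ t ih =>
    rw [qdet_succ, List.ofFn_succ]
    simp only [qD, qC]
    rw [Finset.sum_image (fun a _ b _ h => hc.injective h)]
    refine Finset.sum_congr rfl fun p _ => ?_
    rw [ih (fun i => f i.succ) (fun j => c (p.succAbove j))
      (hc.comp (Fin.strictMono_succAbove p))]
    congr 2
    · unfold qpos
      rw [Finset.filter_image, Finset.card_image_of_injective _ hc.injective]
      simp [hc.lt_iff_lt, fin_card_lt]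
    · congr 1
      ext x
      simp only [Finset.mem_image, Finset.mem_univ, true_and, Finset.mem_erase]
      constructor
      · rintro ⟨a, rfl⟩
        exact ⟨fun h => Fin.succAbove_ne _ _ (hc.injective h), _, rfl⟩
      · rintro ⟨h, a, rfl⟩
        obtain ⟨y, hy⟩ := Fin.exists_succAbove_eq (x := a) (y := p) (fun e => h (e ▸ rfl))
        exact ⟨y, by rw [hy]⟩

lemma qminor_eq_qD (q : k) {m n t : ℕ} (X : Fin m → Fin n → A) (I : Finset (Fin m))
    (J : Finset (Fin n)) (hI : I.card = t) (hJ : J.card = t) :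
    qminor q X I J hI hJ = qD q X (I.sort (· ≤ ·)) J := by
  unfold qminor
  rw [qdet_eq_qD q X t (fun a => (I.orderIsoOfFin hI a : Fin m))
    (fun b => (J.orderIsoOfFin hJ b : Fin n)) (fun a b h => by simpa using h)]
  congr 1
  · apply List.ext_getElem
    · simp [hI]
    · intro i h1 h2
      simp [Finset.orderEmbOfFin_apply]
  · ext x
    simp only [Finset.mem_image, Finset.mem_univ, true_and]
    constructor
    · rintro ⟨a, rfl⟩; exact Subtype.coe_prop _
    · intro hx
      exact ⟨(J.orderIsoOfFin hJ).symm ⟨x, hx⟩, by simp⟩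

/-- every `qD` is a multiple of a sorted one, or zero. -/
lemma qD_sort {q : k} (hq : q ≠ 0) {X : ρ → γ → A} (h : QRel q X) (R : List ρ) (J : Finset γ) :
    (R.Nodup ∧ ∃ c : k, qD q X R J = c • qD q X (R.toFinset.sort (· ≤ ·)) J) ∨ qD q X R J = 0 := by
  by_cases hR : R.Nodup
  · left
    have hp : R.Perm (R.toFinset.sort (· ≤ ·)) := by
      apply List.perm_of_nodup_nodup_toFinset_eq hR (Finset.sort_nodup _ _)
      simp
    obtain ⟨c, hc⟩ := qD_perm hq h hp
    exact ⟨hR, c, hc J⟩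
  · exact Or.inr (qD_not_nodup hq h hR J)

section ideal
variable {q : k} {X : ρ → γ → A}

/-- right ideal of special minors -/
def qS (q : k) (X : ρ → γ → A) (o : ρ) (w : γ) (t : ℕ) : Submodule Aᵐᵒᵖ A :=
  Submodule.span Aᵐᵒᵖ {x | ∃ R J, R.length = t ∧ o ∈ R ∧ w ∈ J ∧ x = qD q X R J}

lemma qS_mul (o : ρ) (w : γ) (t : ℕ)
    {x : A} (hx : x ∈ qS q X o w t) (b : A) : x * b ∈ qS q X o w t :=
  (qS q X o w t).smul_mem (MulOpposite.op b) hx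

lemma qS_smul (o : ρ) (w : γ) (t : ℕ)
    {x : A} (hx : x ∈ qS q X o w t) (c : k) : c • x ∈ qS q X o w t := by
  have := qS_mul o w t hx (algebraMap k A c)
  rwa [← Algebra.commutes, ← Algebra.smul_def] at this

lemma qS_of_smul (o : ρ) (w : γ) (t : ℕ)
    {x : A} {c : k} (hc : c ≠ 0) (hx : c • x ∈ qS q X o w t) : x ∈ qS q X o w t := by
  have := qS_smul o w t hx c⁻¹
  rwa [smul_smul, inv_mul_cancel₀ hc, one_smul] at this

/-- as a `k`-submodule -/
def qSk (q : k) (X : ρ → γ → A) (o : ρ) (w : γ) (t : ℕ) : Submodule k A where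
  carrier := qS q X o w t
  add_mem' := (qS q X o w t).add_mem
  zero_mem' := (qS q X o w t).zero_mem
  smul_mem' c _ hx := qS_smul o w t hx c

lemma qS_gen (o : ρ) (w : γ) (t : ℕ)
    {R : List ρ} {J : Finset γ} (h1 : R.length = t) (h2 : o ∈ R) (h3 : w ∈ J) :
    qD q X R J ∈ qS q X o w t := Submodule.subset_span ⟨R, J, h1, h2, h3, rfl⟩

lemma qG_mem_qS (o : ρ) (w : γ) (hw : ∀ c, c ≤ w) (t : ℕ)
    (z : γ → A) {R : List ρ} {J : Finset γ} (h1 : R.length = t) (h2 : o ∈ R)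
    (h3 : w ∈ J) (l : γ) : qG q z (qD q X R) l J ∈ qS q X o w t := by
  unfold qG
  split_ifs
  · exact qS_smul o w t (qS_mul o w t (qS_gen o w t h1 h2 h3) _) _
  · refine Submodule.add_mem _ (qS_mul o w t (qS_gen o w t h1 h2 h3) _)
      (Submodule.sum_mem _ fun j hj => ?_)
    simp only [Finset.mem_filter] at hj
    refine qS_smul o w t (qS_mul o w t (qS_gen o w t h1 h2 ?_) _) _
    have : w ≠ j := fun e => absurd hj.2 (not_lt.mpr (e ▸ hw l))
    simp [h3, this]

lemma X_mul_gen [Finite ρ] (hq : q ≠ 0) (h : QRel q X) (o : ρ) (ho : ∀ r, o ≤ r) (w : γ) (hw : ∀ c, c ≤ w) (t : ℕ)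
    (s : ρ) : ∀ (l : γ) (R : List ρ) (J : Finset γ), R.length = t → o ∈ R → w ∈ J →
    X s l * qD q X R J ∈ qS q X o w t := by
  induction s using WellFoundedGT.induction with
  | ind s ih =>
  intro l R J h1 h2 h3
  obtain ⟨c, hc, hm⟩ := qG_mem hq h s R
  have key : ∀ f ∈ Submodule.span k
      {f | ∃ s' R', s < s' ∧ (s' :: R').Perm (s :: R) ∧ f = qgen q X s' R'},
      f l J ∈ qSk q X o w t := by
    intro f hf
    induction hf using Submodule.span_induction with
    | mem f hf =>
      obtain ⟨s', R', hs, hp, rfl⟩ := hf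
      have hl := hp.length_eq
      simp only [List.length_cons] at hl
      refine ih s' hs l R' J (by omega) ?_ h3
      have : o ∈ s' :: R' := hp.mem_iff.mpr (List.mem_cons_of_mem _ h2)
      rcases List.mem_cons.mp this with e | e
      · exact absurd hs (not_lt.mpr (e ▸ ho s))
      · exact e
    | zero => exact Submodule.zero_mem _
    | add f g _ _ hf hg => exact Submodule.add_mem _ hf hg
    | smul c f _ hf => exact Submodule.smul_mem _ c hf
  have h4 := key _ hm
  have h5 : qG q (X s) (qD q X R) l J ∈ qSk q X o w t := qG_mem_qS o w hw t (X s) h1 h2 h3 l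
  have h6 := Submodule.sub_mem _ h5 h4
  simp only [Pi.sub_apply, Pi.smul_apply, sub_sub_cancel] at h6
  exact qS_of_smul o w t hc h6

lemma corner_comm (hq : q ≠ 0) (h : QRel q X) (o : ρ) (ho : ∀ r, o ≤ r) (w : γ)
    {R : List ρ} {J : Finset γ} (h2 : o ∈ R) (h3 : w ∈ J) :
    ∃ c : k, c ≠ 0 ∧ qD q X R J * X o w = c • (X o w * qD q X R J) := by
  obtain ⟨c, hc, hm⟩ := qG_mem hq h o R
  have key : ∀ f ∈ Submodule.span k
      {f | ∃ s' R', o < s' ∧ (s' :: R').Perm (o :: R) ∧ f = qgen q X s' R'},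
      f w J = 0 := by
    intro f hf
    induction hf using Submodule.span_induction with
    | mem f hf =>
      obtain ⟨s', R', hs, hp, rfl⟩ := hf
      have h1 : R'.Nodup → False := by
        intro hn
        have hc1 := hp.count_eq o
        rw [List.count_cons_of_ne hs.ne', List.count_cons_self] at hc1
        have := List.count_pos_iff.mpr h2
        have := List.nodup_iff_count_le_one.mp hn o
        omega
      rw [qgen, qD_not_nodup hq h h1, mul_zero]
    | zero => rfl
    | add f g _ _ hf hg => simp [hf, hg]
    | smul c f _ hf => simp [hf]
  have h4 := key _ hm
  simp only [Pi.sub_apply, Pi.smul_apply, qG, if_pos h3, qgen, sub_eq_zero] at h4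
  refine ⟨q * c, mul_ne_zero hq hc, ?_⟩
  rw [mul_smul, ← h4, smul_smul, mul_inv_cancel₀ hq, one_smul]

lemma X_mul_qS [Finite ρ] (hq : q ≠ 0) (h : QRel q X) (o : ρ) (ho : ∀ r, o ≤ r) (w : γ) (hw : ∀ c, c ≤ w) (t : ℕ)
    (s : ρ) (l : γ) {x : A} (hx : x ∈ qS q X o w t) : X s l * x ∈ qS q X o w t := by
  unfold qS at hx
  induction hx using Submodule.span_induction with
  | mem x hx =>
    obtain ⟨R, J, h1, h2, h3, rfl⟩ := hx
    exact X_mul_gen hq h o ho w hw t s l R J h1 h2 h3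
  | zero => rw [mul_zero]; exact Submodule.zero_mem _
  | add x y _ _ hx hy => rw [mul_add]; exact Submodule.add_mem _ hx hy
  | smul b x _ hx =>
    have := qS_mul o w t hx b.unop
    rwa [mul_assoc] at this

lemma u_mul_qS (hq : q ≠ 0) (h : QRel q X) (o : ρ) (ho : ∀ r, o ≤ r) (w : γ) (t : ℕ)
    {u : A} (hu1 : X o w * u = 1) (hu2 : u * X o w = 1) {x : A}
    (hx : x ∈ qS q X o w t) : u * x ∈ qS q X o w t := by
  unfold qS at hx
  induction hx using Submodule.span_induction with
  | mem x hx =>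
    obtain ⟨R, J, h1, h2, h3, rfl⟩ := hx
    obtain ⟨c, hc, e⟩ := corner_comm hq h o ho w h2 h3
    have e2 : u * qD q X R J = c • (qD q X R J * u) := by
      calc u * qD q X R J = u * (qD q X R J * X o w) * u := by
            rw [mul_assoc, mul_assoc, hu1, mul_one]
        _ = c • (u * X o w * qD q X R J * u) := by
            rw [e, mul_smul_comm, smul_mul_assoc]; simp only [mul_assoc]
        _ = _ := by rw [hu2, one_mul]
    rw [e2]
    exact qS_smul o w t (qS_mul o w t (qS_gen o w t h1 h2 h3) _) _
  | zero => rw [mul_zero]; exact Submodule.zero_mem _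
  | add x y _ _ hx hy => rw [mul_add]; exact Submodule.add_mem _ hx hy
  | smul b x _ hx =>
    have := qS_mul o w t hx b.unop
    rwa [mul_assoc] at this

/-- minors whose rows contain the first row -/
lemma mem_of_row [Finite ρ] (hq : q ≠ 0) (h : QRel q X) (o : ρ) (ho : ∀ r, o ≤ r) (w : γ) (hw : ∀ c, c ≤ w) (t : ℕ)
    {u : A} (hu1 : X o w * u = 1) (hu2 : u * X o w = 1) {R : List ρ} {J : Finset γ}
    (h1 : R.length = t) (h2 : o ∈ R) : qD q X R J ∈ qS q X o w t := by
  by_cases h3 : w ∈ J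
  · exact qS_gen o w t h1 h2 h3
  have e := qD_dup hq h h2 (insert w J)
  simp only [qD, qC] at e
  rw [Finset.sum_insert h3, Finset.erase_insert h3, add_eq_zero_iff_eq_neg] at e
  have hm : X o w * qD q X R J ∈ qS q X o w t := by
    apply qS_of_smul o w t (c := (-q) ^ qpos (insert w J) w) (pow_ne_zero _ (neg_ne_zero.mpr hq))
    rw [e]
    refine Submodule.neg_mem _ (Submodule.sum_mem _ fun j hj => qS_smul o w t ?_ _)
    have hwj : w ≠ j := fun e => h3 (e ▸ hj)
    exact X_mul_gen hq h o ho w hw t _ _ _ _ h1 h2 (by simp [hwj])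
  have := u_mul_qS hq h o ho w t hu1 hu2 hm
  rwa [← mul_assoc, hu2, one_mul] at this

/-- sorted minors whose columns contain the last column -/
lemma mem_of_col [Finite ρ] (hq : q ≠ 0) (h : QRel q X) (o : ρ) (ho : ∀ r, o ≤ r) (w : γ) (hw : ∀ c, c ≤ w) (t : ℕ)
    {u : A} (hu1 : X o w * u = 1) (hu2 : u * X o w = 1) {I : Finset ρ} {J : Finset γ}
    (h1 : I.card = t) (h3 : w ∈ J) : qD q X (I.sort (· ≤ ·)) J ∈ qS q X o w t := by
  by_cases h2 : o ∈ I
  · exact qS_gen o w t (by simp [h1]) (by simp [h2]) h3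
  have tr : ∀ I : Finset ρ, qD q X (I.sort (· ≤ ·)) J =
      qD q (fun j i => X i j) (J.sort (· ≤ ·)) I := by
    intro I
    have := qD_transpose h _ (I.sort (· ≤ ·)) (J.sort (· ≤ ·)) le_rfl
      (Finset.sortedLT_sort I).pairwise (Finset.sortedLT_sort J).pairwise
    simpa using this
  have e := qD_dup hq h.transpose (r := w) (R := J.sort (· ≤ ·)) (by simp [h3]) (insert o I)
  simp only [qD, qC] at e
  rw [Finset.sum_insert h2, Finset.erase_insert h2, add_eq_zero_iff_eq_neg] at e
  have hm : X o w * qD q X (I.sort (· ≤ ·)) J ∈ qS q X o w t := by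
    apply qS_of_smul o w t (c := (-q) ^ qpos (insert o I) o) (pow_ne_zero _ (neg_ne_zero.mpr hq))
    rw [tr, e]
    refine Submodule.neg_mem _ (Submodule.sum_mem _ fun i hi => qS_smul o w t ?_ _)
    have hoi : o ≠ i := fun e => h2 (e ▸ hi)
    rw [← tr]
    refine X_mul_gen hq h o ho w hw t _ _ _ _ ?_ (by simp [hoi]) h3
    rw [Finset.length_sort, Finset.card_erase_of_mem (by simp [hi]),
      Finset.card_insert_of_notMem h2, h1]
    rfl
  have := u_mul_qS hq h o ho w t hu1 hu2 hm
  rwa [← mul_assoc, hu2, one_mul] at this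

lemma mem_all [Finite ρ] (hq : q ≠ 0) (h : QRel q X) (o : ρ) (ho : ∀ r, o ≤ r) (w : γ) (hw : ∀ c, c ≤ w) (t : ℕ)
    {u : A} (hu1 : X o w * u = 1) (hu2 : u * X o w = 1) (ht : 1 ≤ t)
    {I : Finset ρ} {J : Finset γ}
    (h1 : I.card = t) : qD q X (I.sort (· ≤ ·)) J ∈ qS q X o w t := by
  by_cases h3 : w ∈ J
  · exact mem_of_col hq h o ho w hw t hu1 hu2 h1 h3
  have hlen : (I.sort (· ≤ ·)).length = t := by simp [h1]
  have big : qD q X (o :: I.sort (· ≤ ·)) (insert w J) ∈ qS q X o w t := by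
    match hR : I.sort (· ≤ ·) with
    | [] => rw [hR] at hlen; simp at hlen; omega
    | r :: R =>
      rw [hR] at hlen
      obtain ⟨c, hc⟩ := qD_perm hq h (List.Perm.swap r o R)
      rw [hc]
      apply qS_smul
      rw [qD, qC]
      refine Submodule.sum_mem _ fun j hj => qS_smul o w t ?_ _
      refine X_mul_qS hq h o ho w hw t _ _ (mem_of_row hq h o ho w hw t hu1 hu2 ?_ (by simp))
      simpa using hlen
  have hm : X o w * qD q X (I.sort (· ≤ ·)) J ∈ qS q X o w t := by
    apply qS_of_smul o w t (c := (-q) ^ qpos (insert w J) w) (pow_ne_zero _ (neg_ne_zero.mpr hq))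
    rw [qD, qC, Finset.sum_insert h3, Finset.erase_insert h3] at big
    refine (Submodule.add_mem_iff_left _ ?_).mp big
    refine Submodule.sum_mem _ fun j hj => qS_smul o w t ?_ _
    have hwj : w ≠ j := fun e => h3 (e ▸ hj)
    exact X_mul_qS hq h o ho w hw t _ _ (mem_of_col hq h o ho w hw t hu1 hu2 h1 (by simp [hwj]))
  have := u_mul_qS hq h o ho w t hu1 hu2 hm
  rwa [← mul_assoc, hu2, one_mul] at this

end ideal
end QAux3

lemma qX_rel {k B : Type*} [Field k] [Ring B] [Algebra k B] (q : k) {m n : ℕ}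
    (φ : OqM k q m n →ₐ[k] B) : QRel q (fun i j => φ (qX k q m n i j)) := by
  have mk : ∀ {x y}, QMRel k q m n x y → φ (RingQuot.mkAlgHom k (QMRel k q m n) x) =
    φ (RingQuot.mkAlgHom k (QMRel k q m n) y) := fun hxy =>
      congrArg φ (RingQuot.mkAlgHom_rel k hxy)
  refine ⟨?_, ?_, ?_, ?_⟩
  · intro i j l hjl
    simpa [qX] using mk (QMRel.row i j l hjl)
  · intro i r j hir
    simpa [qX] using mk (QMRel.col i r j hir)
  · intro i r j l hir hjl
    simpa [qX] using mk (QMRel.anti i r j l hir hjl)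
  · intro i r j l hir hjl
    rw [sub_eq_iff_eq_add']
    simpa only [qX, map_add, map_mul, map_smul] using mk (QMRel.diag i r j l hir hjl)

/-- In the localisation `O_q(M_{m,n})[X_{1n}⁻¹]`, the ideal generated by all `t × t` quantum
minors coincides with the right ideal generated by the minors `[I|J]` with `1 ∈ I` and
`n ∈ J`. -/
theorem localised_ideal_eq_right_ideal_special_minors {k B : Type*} [Field k]
    [Ring B] [Algebra k B]
    (q : k) (hq : q ≠ 0) {m n : ℕ} (hm : 2 ≤ m) (hn : 2 ≤ n)
    (φ : OqM k q m n →ₐ[k] B) (hφ : Function.Injective φ) (u : B)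
    (hu1 : φ (qX k q m n ⟨0, by omega⟩ ⟨n - 1, by omega⟩) * u = 1)
    (hu2 : u * φ (qX k q m n ⟨0, by omega⟩ ⟨n - 1, by omega⟩) = 1)
    (hloc : ∀ b : B, ∃ (a : OqM k q m n) (p : ℕ), b = φ a * u ^ p)
    (t : ℕ) (ht1 : 1 ≤ t) (ht : t ≤ min m n) :
    ∀ b : B,
      b ∈ TwoSidedIdeal.span {x : B |
          ∃ (I : Finset (Fin m)) (J : Finset (Fin n)) (hI : I.card = t) (hJ : J.card = t),
            x = qminor q (fun i j => φ (qX k q m n i j)) I J hI hJ} ↔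
      b ∈ Submodule.span Bᵐᵒᵖ {x : B |
          ∃ (I : Finset (Fin m)) (J : Finset (Fin n)) (hI : I.card = t) (hJ : J.card = t),
            (⟨0, by omega⟩ : Fin m) ∈ I ∧ (⟨n - 1, by omega⟩ : Fin n) ∈ J ∧
            x = qminor q (fun i j => φ (qX k q m n i j)) I J hI hJ} := by
  set X : Fin m → Fin n → B := fun i j => φ (qX k q m n i j) with hX
  have h : QRel q X := qX_rel q φ
  set o : Fin m := ⟨0, by omega⟩ with ho'
  set w : Fin n := ⟨n - 1, by omega⟩ with hw'
  have ho : ∀ r, o ≤ r := fun r => Fin.mk_le_of_le_val (Nat.zero_le _)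
  have hw : ∀ c, c ≤ w := fun c => by rw [Fin.le_def]; simp only [hw']; omega
  have hu1' : X o w * u = 1 := hu1
  have hu2' : u * X o w = 1 := hu2
  have hS : Submodule.span Bᵐᵒᵖ {x : B |
          ∃ (I : Finset (Fin m)) (J : Finset (Fin n)) (hI : I.card = t) (hJ : J.card = t),
            o ∈ I ∧ w ∈ J ∧ x = qminor q X I J hI hJ} = qS q X o w t := by
    apply le_antisymm
    · rw [Submodule.span_le]
      rintro x ⟨I, J, hI, hJ, h1, h2, rfl⟩
      rw [qminor_eq_qD]
      exact qS_gen o w t (by simp [hI]) (by simp [h1]) h2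
    · unfold qS
      rw [Submodule.span_le]
      rintro x ⟨R, J, h1, h2, h3, rfl⟩
      rcases qD_sort hq h R J with ⟨hn, c, hc⟩ | h0
      · by_cases hJ : J.card = t
        · have hI : R.toFinset.card = t := by rw [List.toFinset_card_of_nodup hn, h1]
          rw [hc, ← qminor_eq_qD q X R.toFinset J hI hJ, Algebra.smul_def, Algebra.commutes]
          exact Submodule.smul_mem _ (MulOpposite.op (algebraMap k B c))
            (Submodule.subset_span ⟨_, J, hI, hJ, by simp [h2], h3, rfl⟩)
        · rw [qD_card q X R J (by rw [h1]; exact hJ)]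
          exact Submodule.zero_mem _
      · rw [h0]
        exact Submodule.zero_mem _
  have left : ∀ (b x : B), x ∈ qS q X o w t → b * x ∈ qS q X o w t := by
    have hu : ∀ x ∈ qS q X o w t, u * x ∈ qS q X o w t := fun x hx =>
      u_mul_qS hq h o ho w t hu1' hu2' hx
    have hup : ∀ (p : ℕ), ∀ x ∈ qS q X o w t, u ^ p * x ∈ qS q X o w t := by
      intro p
      induction p with
      | zero => intro x hx; simpa using hx
      | succ p ih => intro x hx; rw [pow_succ, mul_assoc]; exact ih _ (hu x hx)
    have hfree : ∀ (a : FreeAlgebra k (Fin m × Fin n)), ∀ x ∈ qS q X o w t,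
        φ (RingQuot.mkAlgHom k (QMRel k q m n) a) * x ∈ qS q X o w t := by
      intro a
      induction a using FreeAlgebra.induction with
      | grade0 r =>
        intro x hx
        rw [AlgHom.commutes, AlgHom.commutes, ← Algebra.smul_def]
        exact qS_smul o w t hx r
      | grade1 ij =>
        intro x hx
        exact X_mul_qS hq h o ho w hw t ij.1 ij.2 hx
      | mul a b iha ihb =>
        intro x hx
        rw [map_mul, map_mul, mul_assoc]
        exact iha _ (ihb _ hx)
      | add a b iha ihb =>
        intro x hx
        rw [map_add, map_add, add_mul]
        exact Submodule.add_mem _ (iha _ hx) (ihb _ hx)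
    intro b x hx
    obtain ⟨a, p, rfl⟩ := hloc b
    obtain ⟨a', rfl⟩ := RingQuot.mkAlgHom_surjective k (QMRel k q m n) a
    rw [mul_assoc]
    exact hfree a' _ (hup p x hx)
  intro b
  rw [hS]
  constructor
  · intro hb
    let T : TwoSidedIdeal B := TwoSidedIdeal.mk' (qS q X o w t : Set B)
      (Submodule.zero_mem _) (fun h1 h2 => Submodule.add_mem _ h1 h2)
      (fun h1 => Submodule.neg_mem _ h1) (fun {x y} h1 => left x y h1)
      (fun {x y} h1 => qS_mul o w t h1 y)
    have hT : ∀ x, x ∈ T ↔ x ∈ qS q X o w t := fun x => by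
      simp only [T, TwoSidedIdeal.mem_mk', SetLike.mem_coe]
    rw [← hT]
    refine TwoSidedIdeal.span_le.mpr ?_ hb
    rintro x ⟨I, J, hI, hJ, rfl⟩
    rw [SetLike.mem_coe, hT, qminor_eq_qD]
    exact mem_all hq h o ho w hw t hu1' hu2' ht1 hI
  · intro hb
    rw [← hS] at hb
    induction hb using Submodule.span_induction with
    | mem x hx =>
      obtain ⟨I, J, hI, hJ, h1, h2, rfl⟩ := hx
      exact TwoSidedIdeal.subset_span ⟨I, J, hI, hJ, rfl⟩
    | zero => exact TwoSidedIdeal.zero_mem _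
    | add x y _ _ hx hy => exact TwoSidedIdeal.add_mem _ hx hy
    | smul c x _ hx => exact TwoSidedIdeal.mul_mem_right _ _ _ hx
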